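/- Let x ∈ W²_n, z₀ ∈ ℝ^q and θ ∈ int S, and let (x̂_i, ζ_i, ϑ_i) be a sequence with x̂_i ∈ PL(𝒫_i, ℝⁿ), ζ_i ∈ ℝ^q, ϑ_i ∈ S such that lim_{i→∞} (‖x̂_i − x‖_{W²} + |ζ_i − z₀| + |ϑ_i − θ|) = 0. Let ẑ_i ∈ PL(𝒫_i, ℝ^q) be the trapezoidally-discretized clean-state path associated with (x̂_i, ζ_i, ϑ_i). Then the sequence {‖ẑ_i‖_∞}_{i=1}^∞ is bounded. -/

import Mathlib

open MeasureTheory Filter Set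

/-!
The one-dimensional Sobolev embedding turns `W²`-boundedness of the inputs into uniform
boundedness, so along the inputs the right-hand side `h` has linear growth `A + L * ‖z‖` with
constants independent of the mesh. The mesh condition keeps `1 - L * δ / 2` above a fixed `κ > 0`,
which makes each implicit trapezoidal step an explicit one with growth factor `1 + (L / κ) * δ`;
the discrete Grönwall inequality then bounds the path at the nodes. Between two nodes the path is
affine, and balls are convex.
-/

section TimeGrid

/-- A partition `a = τ 0 < τ 1 < ⋯ < τ N = b` of `[a, b]`. The values `τ k` with `k > N` are
irrelevant. -/
structure IsTimeGrid (τ : ℕ → ℝ) (N : ℕ) (a b : ℝ) : Prop where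
  zero_eq : τ 0 = a
  last_eq : τ N = b
  lt_succ : ∀ k < N, τ k < τ (k + 1)

namespace IsTimeGrid

variable {τ : ℕ → ℝ} {N : ℕ} {a b : ℝ}

lemma monotoneOn (hτ : IsTimeGrid τ N a b) : MonotoneOn τ (Iic N) :=
  monotoneOn_of_le_add_one ordConnected_Iic fun k _ _ hk => (hτ.lt_succ k hk).le

lemma mem_Icc (hτ : IsTimeGrid τ N a b) {k : ℕ} (hk : k ≤ N) : τ k ∈ Icc a b :=
  ⟨hτ.zero_eq ▸ hτ.monotoneOn (Nat.zero_le N) hk (Nat.zero_le k),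
    hτ.last_eq ▸ hτ.monotoneOn hk self_mem_Iic hk⟩

lemma left_le_right (hτ : IsTimeGrid τ N a b) : a ≤ b :=
  hτ.zero_eq ▸ (hτ.mem_Icc (Nat.zero_le N)).2

lemma truncate (hτ : IsTimeGrid τ N a b) {k : ℕ} (hk : k ≤ N) : IsTimeGrid τ k a (τ k) :=
  ⟨hτ.zero_eq, rfl, fun j hj => hτ.lt_succ j (hj.trans_le hk)⟩

lemma exists_mem_Ioc (hτ : IsTimeGrid τ N a b) {t : ℝ} (ht : t ∈ Ioc a b) :
    ∃ k < N, t ∈ Ioc (τ k) (τ (k + 1)) := by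
  induction N generalizing b with
  | zero => exact absurd (hτ.zero_eq.symm.trans hτ.last_eq) (ht.1.trans_le ht.2).ne
  | succ N ih =>
    rcases le_or_gt t (τ N) with htN | htN
    · obtain ⟨k, hk, hkt⟩ := ih (hτ.truncate N.le_succ) ⟨ht.1, htN⟩
      exact ⟨k, hk.trans N.lt_succ_self, hkt⟩
    · exact ⟨N, N.lt_succ_self, htN, hτ.last_eq ▸ ht.2⟩

lemma discrete_gronwall (hτ : IsTimeGrid τ N a b) {u : ℕ → ℝ} {c m : ℝ} (hu0 : 0 ≤ u 0)
    (hc : 0 ≤ c) (hm : 0 ≤ m)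
    (hu : ∀ k < N, u (k + 1) ≤ (1 + c * (τ (k + 1) - τ k)) * u k + m * (τ (k + 1) - τ k))
    {k : ℕ} (hk : k ≤ N) :
    u k ≤ (u 0 + m * (b - a)) * Real.exp (c * (b - a)) := by
  -- The library inequality asks for a recurrence at every index, so both sequences are
  -- continued as constants after the last node.
  set σ : ℕ → ℝ := fun j => τ (min j N) with hσ
  have hσ_step (j : ℕ) : 0 ≤ σ (j + 1) - σ j :=
    sub_nonneg.2 (hτ.monotoneOn (min_le_right j N) (min_le_right (j + 1) N) (by gcongr; omega))
  have hrec (j : ℕ) : u (min (j + 1) N) ≤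
      (1 + c * (σ (j + 1) - σ j)) * u (min j N) + m * (σ (j + 1) - σ j) := by
    rcases lt_or_ge j N with hj | hj
    · simpa only [hσ, min_eq_left hj.le, min_eq_left (Nat.succ_le_of_lt hj)] using hu j hj
    · simp [hσ, hj, hj.trans j.le_succ]
  have hsum (r : ℝ) : ∑ j ∈ Finset.Ico 0 k, r * (σ (j + 1) - σ j) = r * (τ k - a) := by
    rw [← Finset.mul_sum, ← Finset.range_eq_Ico, Finset.sum_range_sub]
    simp only [hσ, min_eq_left hk, Nat.zero_min, hτ.zero_eq]
  have hgronwall := _root_.discrete_gronwall (u := fun j => u (min j N)) (n₀ := 0)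
    (by simpa using hu0) (fun j _ => hrec j) (fun j _ => mul_nonneg hc (hσ_step j))
    (fun j _ => mul_nonneg hm (hσ_step j)) (Nat.zero_le k)
  simp only [hsum, min_eq_left hk, Nat.zero_min] at hgronwall
  have hτk := (hτ.mem_Icc hk).2
  have hab := hτ.left_le_right
  exact hgronwall.trans (by gcongr)

end IsTimeGrid

end TimeGrid

section Sobolev

variable {E : Type*} [NormedAddCommGroup E] {a b : ℝ}

/-- Being constant on each cell `[τ k, τ (k + 1))` of a time grid: the derivatives of functions
that are piecewise linear on the grid. -/
def IsStepOn {β : Type*} (τ : ℕ → ℝ) (N : ℕ) (d : ℝ → β) : Prop :=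
  ∀ k < N, ∃ c, ∀ s ∈ Ico (τ k) (τ (k + 1)), d s = c

lemma IsStepOn.memLp_restrict_Ioc {τ : ℕ → ℝ} {N : ℕ} {d : ℝ → E} (hd : IsStepOn τ N d)
    (hτ : IsTimeGrid τ N a b) (p : ENNReal) : MemLp d p (volume.restrict (Ioc a b)) := by
  rw [Measure.restrict_congr_set Ico_ae_eq_Ioc.symm,
    ← memLp_indicator_iff_restrict measurableSet_Ico]
  induction N generalizing b with
  | zero => simp [← hτ.zero_eq, ← hτ.last_eq]
  | succ N ih =>
    obtain ⟨c, hc⟩ := hd N N.lt_succ_self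
    have hτN := hτ.truncate N.le_succ
    have hfirst := ih (fun k hk => hd k (hk.trans N.lt_succ_self)) hτN
    have hlast : MemLp ((Ico (τ N) (τ (N + 1))).indicator d) p := by
      rw [indicator_congr hc]
      exact memLp_indicator_const p measurableSet_Ico c (Or.inr measure_Ico_lt_top.ne)
    rw [← hτ.last_eq,
      ← Ico_union_Ico_eq_Ico hτN.left_le_right (hτ.lt_succ N N.lt_succ_self).le,
      indicator_union_of_disjoint Ico_disjoint_Ico_same]
    exact hfirst.add hlast

lemma integral_norm_le_sqrt_mul_sqrt {α : Type*} {mα : MeasurableSpace α} {μ : Measure α}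
    [IsFiniteMeasure μ] {f : α → E} (hf : MemLp f 2 μ) :
    ∫ x, ‖f x‖ ∂μ ≤ √(μ.real univ) * √(∫ x, ‖f x‖ ^ 2 ∂μ) := by
  have hholder := integral_mul_le_Lp_mul_Lq_of_nonneg Real.HolderConjugate.two_two
    (μ := μ) (f := fun _ => 1) (g := fun x => ‖f x‖) (Eventually.of_forall fun _ => zero_le_one)
    (Eventually.of_forall fun _ => norm_nonneg _) (memLp_const 1) (by simpa using hf.norm)
  simpa [Real.sqrt_eq_rpow] using hholder

/-- The norm `(|y(a)|² + ∫ |y'|²)^(1/2)` of `W²` on `[a, b]`. -/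
noncomputable def w2Norm (a b : ℝ) (y y' : ℝ → E) : ℝ :=
  √(‖y a‖ ^ 2 + ∫ s in Ioc a b, ‖y' s‖ ^ 2)

variable [NormedSpace ℝ E]

/-- Membership in `W²` on `[a, b]`, where the a.e. derivative `y'` is carried along as data:
`y` is the primitive of `y'`, and `y'` is square integrable. -/
structure IsW2 (a b : ℝ) (y y' : ℝ → E) : Prop where
  eq_add_integral : ∀ t ∈ Icc a b, y t = y a + ∫ s in Ioc a t, y' s
  memLp : MemLp y' 2 (volume.restrict (Ioc a b))

namespace IsW2

variable {y y' w w' : ℝ → E}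

lemma integrableOn (hy : IsW2 a b y y') : IntegrableOn y' (Ioc a b) :=
  hy.memLp.integrable one_le_two

lemma sub (hy : IsW2 a b y y') (hw : IsW2 a b w w') : IsW2 a b (y - w) (y' - w') where
  eq_add_integral t ht := by
    have hsub : Ioc a t ⊆ Ioc a b := Ioc_subset_Ioc_right ht.2
    simp only [Pi.sub_apply]
    rw [integral_sub (hy.integrableOn.mono_set hsub) (hw.integrableOn.mono_set hsub),
      hy.eq_add_integral t ht, hw.eq_add_integral t ht]
    abel
  memLp := hy.memLp.sub hw.memLp

lemma norm_le_mul_w2Norm (hy : IsW2 a b y y') {t : ℝ} (ht : t ∈ Icc a b) :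
    ‖y t‖ ≤ (1 + √(b - a)) * w2Norm a b y y' := by
  have hinitial : ‖y a‖ ≤ w2Norm a b y y' :=
    Real.le_sqrt_of_sq_le (le_add_of_nonneg_right (by positivity))
  have hderiv : √(∫ s in Ioc a b, ‖y' s‖ ^ 2) ≤ w2Norm a b y y' :=
    Real.sqrt_le_sqrt (le_add_of_nonneg_left (by positivity))
  calc ‖y t‖
      ≤ ‖y a‖ + ‖∫ s in Ioc a t, y' s‖ := hy.eq_add_integral t ht ▸ norm_add_le _ _
    _ ≤ ‖y a‖ + ∫ s in Ioc a t, ‖y' s‖ := by gcongr; exact norm_integral_le_integral_norm _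
    _ ≤ ‖y a‖ + ∫ s in Ioc a b, ‖y' s‖ := by
        gcongr ‖y a‖ + ?_
        exact setIntegral_mono_set hy.integrableOn.norm
          (Eventually.of_forall fun _ => norm_nonneg _) (Ioc_subset_Ioc_right ht.2).eventuallyLE
    _ ≤ ‖y a‖ + √(b - a) * √(∫ s in Ioc a b, ‖y' s‖ ^ 2) := by
        gcongr
        simpa [ht.1.trans ht.2] using integral_norm_le_sqrt_mul_sqrt hy.memLp
    _ ≤ w2Norm a b y y' + √(b - a) * w2Norm a b y y' := by gcongr
    _ = (1 + √(b - a)) * w2Norm a b y y' := by ring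

lemma norm_le_of_w2Norm_sub_le (hy : IsW2 a b y y') (hw : IsW2 a b w w') {R : ℝ}
    (hR : w2Norm a b (y - w) (y' - w') ≤ R) {t : ℝ} (ht : t ∈ Icc a b) :
    ‖y t‖ ≤ (1 + √(b - a)) * (R + w2Norm a b w w') := by
  calc ‖y t‖
      ≤ ‖(y - w) t‖ + ‖w t‖ := by simpa using norm_add_le (y t - w t) (w t)
    _ ≤ (1 + √(b - a)) * w2Norm a b (y - w) (y' - w') + (1 + √(b - a)) * w2Norm a b w w' :=
        add_le_add ((hy.sub hw).norm_le_mul_w2Norm ht) (hw.norm_le_mul_w2Norm ht)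
    _ ≤ (1 + √(b - a)) * (R + w2Norm a b w w') := by rw [← mul_add]; gcongr

end IsW2

end Sobolev

section Trapezoidal

variable {F : Type*} [NormedAddCommGroup F] [NormedSpace ℝ F]

/-- The implicit trapezoidal discretization of `ż = g(t, z)` on the grid `τ`, extended affinely
between consecutive nodes. -/
def IsTrapezoidalPath (g : ℝ → F → F) (τ : ℕ → ℝ) (N : ℕ) (z : ℝ → F) : Prop :=
  ∀ k < N, ∀ s ∈ Ioc (τ k) (τ (k + 1)),
    z s = z (τ k) + ((s - τ k) / 2) • (g (τ k) (z (τ k)) + g (τ (k + 1)) (z (τ (k + 1))))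

lemma le_of_le_add_trapezoid {e e' A L δ κ : ℝ} (he : 0 ≤ e) (hA : 0 ≤ A) (hL : 0 ≤ L)
    (hδ : 0 ≤ δ) (hκ : 0 < κ) (hκδ : κ ≤ 1 - L * δ / 2)
    (hstep : e' ≤ e + δ / 2 * ((A + L * e) + (A + L * e'))) :
    e' ≤ (1 + L / κ * δ) * e + A / κ * δ := by
  suffices hincrement : e' - e ≤ (L * e + A) * δ / κ by
    linear_combination hincrement
  rcases le_total e' e with hle | hle
  · exact (sub_nonpos.2 hle).trans (by positivity)
  · rw [le_div_iff₀ hκ]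
    calc (e' - e) * κ
        ≤ (e' - e) * (1 - L * δ / 2) := mul_le_mul_of_nonneg_left hκδ (sub_nonneg.2 hle)
      _ ≤ (L * e + A) * δ := by linear_combination hstep

namespace IsTrapezoidalPath

variable {g : ℝ → F → F} {τ : ℕ → ℝ} {N : ℕ} {a b A L κ : ℝ} {z : ℝ → F}

lemma norm_succ_le (hz : IsTrapezoidalPath g τ N z) (hτ : IsTimeGrid τ N a b)
    (hg : ∀ t ∈ Icc a b, ∀ v, ‖g t v‖ ≤ A + L * ‖v‖) {k : ℕ} (hk : k < N) :
    ‖z (τ (k + 1))‖ ≤ ‖z (τ k)‖ +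
      (τ (k + 1) - τ k) / 2 * ((A + L * ‖z (τ k)‖) + (A + L * ‖z (τ (k + 1))‖)) := by
  have hδ : 0 < (τ (k + 1) - τ k) / 2 := half_pos (sub_pos.2 (hτ.lt_succ k hk))
  have hslopes := norm_add_le_of_le (hg _ (hτ.mem_Icc hk.le) (z (τ k)))
    (hg _ (hτ.mem_Icc hk) (z (τ (k + 1))))
  conv_lhs => rw [hz k hk _ ⟨hτ.lt_succ k hk, le_rfl⟩]
  refine (norm_add_le _ _).trans ?_
  rw [norm_smul, Real.norm_of_nonneg hδ.le]
  gcongr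

lemma norm_node_le (hz : IsTrapezoidalPath g τ N z) (hτ : IsTimeGrid τ N a b) (hL : 0 ≤ L)
    (hκ : 0 < κ) (hmesh : ∀ k < N, κ ≤ 1 - L * (τ (k + 1) - τ k) / 2)
    (hg : ∀ t ∈ Icc a b, ∀ v, ‖g t v‖ ≤ A + L * ‖v‖) {k : ℕ} (hk : k ≤ N) :
    ‖z (τ k)‖ ≤ (‖z a‖ + A / κ * (b - a)) * Real.exp (L / κ * (b - a)) := by
  have hA : 0 ≤ A := by
    simpa using (norm_nonneg _).trans (hg a (left_mem_Icc.2 hτ.left_le_right) 0)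
  rw [← congrArg z hτ.zero_eq]
  exact hτ.discrete_gronwall (u := fun k => ‖z (τ k)‖) (norm_nonneg _) (by positivity)
    (by positivity) (fun k hk => le_of_le_add_trapezoid (norm_nonneg _) hA hL
      (sub_nonneg.2 (hτ.lt_succ k hk).le) hκ (hmesh k hk) (hz.norm_succ_le hτ hg hk)) hk

lemma mem_segment (hz : IsTrapezoidalPath g τ N z) {k : ℕ} (hk : k < N) {t : ℝ}
    (ht : t ∈ Ioc (τ k) (τ (k + 1))) : z t ∈ segment ℝ (z (τ k)) (z (τ (k + 1))) := by
  have hδ : 0 < τ (k + 1) - τ k := sub_pos.2 (ht.1.trans_le ht.2)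
  have hnext := hz k hk _ ⟨ht.1.trans_le ht.2, le_rfl⟩
  rw [segment_eq_image']
  refine ⟨(t - τ k) / (τ (k + 1) - τ k), ⟨div_nonneg (sub_nonneg.2 ht.1.le) hδ.le,
    div_le_one_of_le₀ (sub_le_sub_right ht.2 _) hδ.le⟩, ?_⟩
  simp only
  rw [hz k hk t ht, sub_eq_of_eq_add' hnext, smul_smul]
  congr 2
  field_simp

lemma norm_le (hz : IsTrapezoidalPath g τ N z) (hτ : IsTimeGrid τ N a b) (hL : 0 ≤ L)
    (hκ : 0 < κ) (hmesh : ∀ k < N, κ ≤ 1 - L * (τ (k + 1) - τ k) / 2)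
    (hg : ∀ t ∈ Icc a b, ∀ v, ‖g t v‖ ≤ A + L * ‖v‖) {t : ℝ} (ht : t ∈ Icc a b) :
    ‖z t‖ ≤ (‖z a‖ + A / κ * (b - a)) * Real.exp (L / κ * (b - a)) := by
  have hnode {k : ℕ} (hk : k ≤ N) := hz.norm_node_le hτ hL hκ hmesh hg hk
  rcases ht.1.eq_or_lt with rfl | hat
  · simpa only [hτ.zero_eq] using hnode N.zero_le
  · obtain ⟨k, hk, hkt⟩ := hτ.exists_mem_Ioc ⟨hat, ht.2⟩
    rw [← mem_closedBall_zero_iff]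
    exact (convex_closedBall _ _).segment_subset (mem_closedBall_zero_iff.2 (hnode hk.le))
      (mem_closedBall_zero_iff.2 (hnode hk)) (hz.mem_segment hk hkt)

end IsTrapezoidalPath

end Trapezoidal

section Boundedness

variable {E F Θ : Type*} [NormedAddCommGroup E] [NormedAddCommGroup F]

lemma exists_norm_le_add_mul_of_lipschitz [TopologicalSpace Θ] {h : ℝ → E → F → Θ → F}
    (hh : Continuous fun p : ℝ × E × F × Θ => h p.1 p.2.1 p.2.2.1 p.2.2.2) {a b L : ℝ}
    {S K : Set Θ} (hK : IsCompact K)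
    (hLip : ∀ θ ∈ S, ∀ t ∈ Icc a b, ∀ u u' v v',
      ‖h t u v θ - h t u' v' θ‖ ≤ L * (‖u - u'‖ + ‖v - v'‖)) :
    ∃ M, ∀ θ ∈ S ∩ K, ∀ t ∈ Icc a b, ∀ u v, ‖h t u v θ‖ ≤ M + L * (‖u‖ + ‖v‖) := by
  have hcont : Continuous fun p : ℝ × Θ => h p.1 0 0 p.2 :=
    hh.comp (f := fun p : ℝ × Θ => (p.1, (0 : E), (0 : F), p.2)) (by fun_prop)
  obtain ⟨M, hM⟩ := (isCompact_Icc.prod hK).exists_bound_of_continuousOn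
    (s := Icc a b ×ˢ K) hcont.continuousOn
  refine ⟨M, fun θ hθ t ht u v => ?_⟩
  calc ‖h t u v θ‖
      ≤ ‖h t 0 0 θ‖ + ‖h t u v θ - h t 0 0 θ‖ := norm_le_norm_add_norm_sub' _ _
    _ ≤ M + L * (‖u‖ + ‖v‖) :=
        add_le_add (hM (t, θ) ⟨ht, hθ.2⟩) (by simpa using hLip θ hθ.1 t ht u 0 v 0)

lemma slack_div_le_one_sub_half_mul {Lf L δ : ℝ} (hLf : 0 < Lf) (hL : 0 ≤ L)
    (hδ : (Lf + L) * δ < 2) : Lf / (Lf + L) ≤ 1 - L * δ / 2 := by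
  rw [div_le_iff₀ (by positivity)]
  nlinarith

theorem stmt10_general [NormedSpace ℝ E] [NormedSpace ℝ F] [SeminormedAddCommGroup Θ]
    [ProperSpace Θ] {ι : Type*} {a b : ℝ} {N : ι → ℕ} {τ : ι → ℕ → ℝ}
    (hτ : ∀ i, IsTimeGrid (τ i) (N i) a b) {S : Set Θ} {h : ℝ → E → F → Θ → F}
    (hh : Continuous fun p : ℝ × E × F × Θ => h p.1 p.2.1 p.2.2.1 p.2.2.2)
    {Lf L : ℝ} (hLf : 0 < Lf) (hL : 0 ≤ L)
    (hLip : ∀ θ ∈ S, ∀ t ∈ Icc a b, ∀ u u' v v',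
      ‖h t u v θ - h t u' v' θ‖ ≤ L * (‖u - u'‖ + ‖v - v'‖))
    (hmesh : ∀ i, ∀ k < N i, (Lf + L) * (τ i (k + 1) - τ i k) < 2)
    {x x' : ℝ → E} (hx : IsW2 a b x x') {z₀ : F} {θ : Θ}
    {xh d : ι → ℝ → E} (hxh : ∀ i, IsW2 a b (xh i) (d i)) {ϑ : ι → Θ} (hϑ : ∀ i, ϑ i ∈ S)
    {zh : ι → ℝ → F}
    (hbdd : BddAbove (range fun i =>
      w2Norm a b (xh i - x) (d i - x') + ‖zh i a - z₀‖ + ‖ϑ i - θ‖))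
    (hzh : ∀ i, IsTrapezoidalPath (fun t v => h t (xh i t) v (ϑ i)) (τ i) (N i) (zh i)) :
    ∃ C : ℝ, ∀ i, ∀ t ∈ Icc a b, ‖zh i t‖ ≤ C := by
  obtain ⟨R, hR⟩ := hbdd
  have hsum (i : ι) : w2Norm a b (xh i - x) (d i - x') + ‖zh i a - z₀‖ + ‖ϑ i - θ‖ ≤ R :=
    hR (mem_range_self i)
  have hw (i : ι) : 0 ≤ w2Norm a b (xh i - x) (d i - x') := Real.sqrt_nonneg _
  obtain ⟨M, hM⟩ := exists_norm_le_add_mul_of_lipschitz hh (isCompact_closedBall θ R) hLip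
  set X := (1 + √(b - a)) * (R + w2Norm a b x x')
  have hgrowth (i : ι) : ∀ t ∈ Icc a b, ∀ v,
      ‖h t (xh i t) v (ϑ i)‖ ≤ (M + L * X) + L * ‖v‖ := fun t ht v => by
    have hϑR : ϑ i ∈ Metric.closedBall θ R := by
      rw [mem_closedBall_iff_norm]; linarith [hsum i, hw i, norm_nonneg (zh i a - z₀)]
    have hxX : ‖xh i t‖ ≤ X := (hxh i).norm_le_of_w2Norm_sub_le hx
      (by linarith [hsum i, norm_nonneg (zh i a - z₀), norm_nonneg (ϑ i - θ)]) ht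
    linear_combination hM _ ⟨hϑ i, hϑR⟩ t ht (xh i t) v + L * hxX
  set κ := Lf / (Lf + L)
  have hκ : 0 < κ := by positivity
  refine ⟨(‖z₀‖ + R + (M + L * X) / κ * (b - a)) * Real.exp (L / κ * (b - a)),
    fun i t ht => ((hzh i).norm_le (hτ i) hL hκ
      (fun k hk => slack_div_le_one_sub_half_mul hLf hL (hmesh i k hk)) (hgrowth i) ht).trans ?_⟩
  have hz₀ : ‖zh i a‖ ≤ ‖z₀‖ + R := by
    linarith [norm_le_norm_add_norm_sub' (zh i a) z₀, hsum i, hw i, norm_nonneg (ϑ i - θ)]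
  gcongr

end Boundedness

/-- trapezoidally-discretized clean-state paths are bounded: if
`(x̂_i, ζ_i, ϑ_i) → (x, z₀, θ)` with `θ ∈ int S` and `ϑ_i ∈ S`, then the associated
trapezoidally-discretized clean-state paths `ẑ_i` are uniformly bounded in supremum
norm. Piecewise linear `x̂_i ∈ PL(𝒫_i)` are encoded by their piecewise constant
derivatives `d i`; the `W²` function `x` by the pair `(x, x')`. -/
theorem stmt10 {n q m : ℕ} (tf : ℝ) (htf : 0 < tf)
    (N : ℕ → ℕ) (hN1 : ∀ i, 1 ≤ N i) (tP : ℕ → ℕ → ℝ)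
    (htP0 : ∀ i, tP i 0 = 0) (htPN : ∀ i, tP i (N i) = tf)
    (htPmono : ∀ i, ∀ k < N i, tP i k < tP i (k + 1))
    (hnested : ∀ i, ∀ k ≤ N i, ∃ k' ≤ N (i + 1), tP (i + 1) k' = tP i k)
    (hmesh : Tendsto (fun i => ⨆ k : Fin (N i), (tP i (k.1 + 1) - tP i k.1))
      atTop (nhds 0))
    (S : Set (EuclideanSpace ℝ (Fin m)))
    (h : ℝ → EuclideanSpace ℝ (Fin n) → EuclideanSpace ℝ (Fin q) →
      EuclideanSpace ℝ (Fin m) → EuclideanSpace ℝ (Fin q))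
    (hhc : Continuous fun p : ℝ × EuclideanSpace ℝ (Fin n) × EuclideanSpace ℝ (Fin q) ×
      EuclideanSpace ℝ (Fin m) => h p.1 p.2.1 p.2.2.1 p.2.2.2)
    (Lf Lh : ℝ) (hLf : 0 < Lf) (hLh : 0 < Lh)
    (hhLip : ∀ θ' ∈ S, ∀ t ∈ Icc (0:ℝ) tf,
      ∀ (a a' : EuclideanSpace ℝ (Fin n)) (b b' : EuclideanSpace ℝ (Fin q)),
      ‖h t a b θ' - h t a' b' θ'‖ ≤ Lh * (‖a - a'‖ + ‖b - b'‖))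
    (hmeshLip : ∀ i, ∀ k < N i, (Lf + Lh) * (tP i (k + 1) - tP i k) < 2)
    -- the limit point
    (x x' : ℝ → EuclideanSpace ℝ (Fin n))
    (hInt : IntegrableOn x' (Icc 0 tf))
    (hL2 : IntegrableOn (fun t => ‖x' t‖ ^ 2) (Icc 0 tf))
    (hAC : ∀ t ∈ Icc (0:ℝ) tf, x t = x 0 + ∫ s in Ioc (0:ℝ) t, x' s)
    (z0 : EuclideanSpace ℝ (Fin q))
    (θ : EuclideanSpace ℝ (Fin m)) (hθ : θ ∈ interior S)
    -- the approximating sequence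
    (xh d : ℕ → ℝ → EuclideanSpace ℝ (Fin n))
    (hdpc : ∀ i, ∀ k < N i, ∃ b : EuclideanSpace ℝ (Fin n),
      ∀ s ∈ Ico (tP i k) (tP i (k + 1)), d i s = b)
    (hxhAC : ∀ i, ∀ s ∈ Icc (0:ℝ) tf, xh i s = xh i 0 + ∫ u in Ioc (0:ℝ) s, d i u)
    (ζ : ℕ → EuclideanSpace ℝ (Fin q)) (ϑ : ℕ → EuclideanSpace ℝ (Fin m))
    (hϑS : ∀ i, ϑ i ∈ S)
    (hconv : Tendsto (fun i =>
      Real.sqrt (‖xh i 0 - x 0‖ ^ 2 + ∫ s in Ioc (0:ℝ) tf, ‖d i s - x' s‖ ^ 2)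
      + ‖ζ i - z0‖ + ‖ϑ i - θ‖) atTop (nhds 0))
    -- the trapezoidally-discretized clean-state paths
    (zh : ℕ → ℝ → EuclideanSpace ℝ (Fin q))
    (hzh0 : ∀ i, zh i 0 = ζ i)
    (hzhrec : ∀ i, ∀ k < N i, ∀ s ∈ Ioc (tP i k) (tP i (k + 1)),
      zh i s = zh i (tP i k) + ((s - tP i k) / 2) •
        (h (tP i k) (xh i (tP i k)) (zh i (tP i k)) (ϑ i) +
         h (tP i (k + 1)) (xh i (tP i (k + 1))) (zh i (tP i (k + 1))) (ϑ i))) :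
    ∃ C : ℝ, ∀ i, ∀ t ∈ Icc (0:ℝ) tf, ‖zh i t‖ ≤ C := by
  have hgrid (i : ℕ) : IsTimeGrid (tP i) (N i) 0 tf := ⟨htP0 i, htPN i, htPmono i⟩
  have hx : IsW2 0 tf x x' := ⟨hAC, (memLp_two_iff_integrable_sq_norm
    (hInt.mono_set Ioc_subset_Icc_self).aestronglyMeasurable).2
    (hL2.mono_set Ioc_subset_Icc_self)⟩
  have hxh (i : ℕ) : IsW2 0 tf (xh i) (d i) :=
    ⟨hxhAC i, IsStepOn.memLp_restrict_Ioc (hdpc i) (hgrid i) 2⟩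
  simp only [← hzh0] at hconv
  exact stmt10_general hgrid hhc hLf hLh.le hhLip hmeshLip hx hxh hϑS hconv.bddAbove_range hzhrec
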